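/- arXiv:1503.08551 — 6 statements merged into one kernel-verified Lean document; each statement's English description precedes it below -/
import Mathlib

section
/- Let n be a natural number, let f : ℕ → ℕ be a (total) function such that f(x) < n for all x ∈ ℕ, and let m be a natural number with 2 < m ≤ n. If rr_f(m) holds, then rr_f(m − 1) holds. -/
/-- `rr f n`: either `f` is non-injective with ordered witnesses, or
values `< n - 1` occur arbitrarily late. -/
def rr (f : ℕ → ℕ) (n : ℕ) : Prop :=
  (∃ p q : ℕ, p < q ∧ f p = f q) ∨ (∀ x : ℕ, ∃ y : ℕ, x ≤ y ∧ f y < n - 1)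

theorem stmt1 (n : ℕ) (f : ℕ → ℕ) (hf : ∀ x : ℕ, f x < n)
    (m : ℕ) (hm2 : 2 < m) (hmn : m ≤ n) (h : rr f m) : rr f (m - 1) := by
  rcases h with h | h
  · exact Or.inl h
  · by_cases hc : ∃ p q : ℕ, p < q ∧ f p = f q
    · exact Or.inl hc
    · refine Or.inr fun x => ?_
      -- Take two successive late arguments `y < z` with values below `m - 1`: if neither value is
      -- below `m - 2`, both equal `m - 2`, which is a repetition.
      obtain ⟨y, hxy, hy⟩ := h x
      obtain ⟨z, hyz, hz⟩ := h (y + 1)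
      by_cases hy' : f y < m - 1 - 1
      · exact ⟨y, hxy, hy'⟩
      · by_cases hz' : f z < m - 1 - 1
        · exact ⟨z, by omega, hz'⟩
        · exact absurd ⟨y, z, by omega, by omega⟩ hc
end

section
/- Let M be a nonempty type equipped with a binary relation le, a binary operation max : M → M → M, and a unary operation s : M → M satisfying clauses (C1) le a a for all a, (C2) for all a, b, g, le (max a b) g implies le a g, and (C3) for all a, b, g, le (max a b) g implies le b g. Then for every k ∈ ℕ, every sequence x : ℕ → M, and every t ∈ M, le t (m(k, x, t)) holds. -/
/-- The iterated max term `m(k, x, t)`: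
`m(0, x, t) = t` and `m(k+1, x, t) = m(k, x, max(s(x(k+1)), t))`. -/
def iterMax {M : Type*} (mx : M → M → M) (s : M → M) : ℕ → (ℕ → M) → M → M
  | 0, _, t => t
  | k + 1, x, t => iterMax mx s k x (mx (s (x (k + 1))) t)

theorem stmt3 (M : Type*) [Nonempty M] (le : M → M → Prop)
    (mx : M → M → M) (s : M → M)
    (C1 : ∀ a : M, le a a)
    (C2 : ∀ a b g : M, le (mx a b) g → le a g)
    (C3 : ∀ a b g : M, le (mx a b) g → le b g) :
    ∀ (k : ℕ) (x : ℕ → M) (t : M), le t (iterMax mx s k x t) := by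
  intro k
  induction k with
  | zero => exact fun _ t => C1 t
  | succ k ih =>
    -- The induction hypothesis is applied to the enlarged term `mx (s (x (k + 1))) t`.
    exact fun x t => C3 _ _ _ (ih x (mx (s (x (k + 1))) t))
end

section
/- Let M be a nonempty type equipped with a binary relation le, a binary operation max : M → M → M, and a unary operation s : M → M satisfying clauses (C1) le a a for all a, (C2) for all a, b, g, le (max a b) g implies le a g, and (C3) for all a, b, g, le (max a b) g implies le b g. Then for every k ∈ ℕ, every sequence x : ℕ → M, and every t ∈ M, le (s(x(k+1))) (m(k, x, max(s(x(k+1)), t))) holds. -/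
theorem stmt4 (M : Type*) [Nonempty M] (le : M → M → Prop)
    (mx : M → M → M) (s : M → M)
    (C1 : ∀ a : M, le a a)
    (C2 : ∀ a b g : M, le (mx a b) g → le a g)
    (C3 : ∀ a b g : M, le (mx a b) g → le b g) :
    ∀ (k : ℕ) (x : ℕ → M) (t : M),
      le (s (x (k + 1))) (iterMax mx s k x (mx (s (x (k + 1))) t)) := by
  -- By (C3), the last argument `t` of `iterMax` lies below the whole term.
  have h : ∀ (k : ℕ) (x : ℕ → M) (t : M), le t (iterMax mx s k x t) := by
    intro k x
    induction k with
    | zero => exact C1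
    | succ k ih => exact fun t => C3 _ _ _ (ih _)
  exact fun k x t => C2 _ _ _ (h k x _)
end

section
/- Let n ∈ ℕ and let M be a nonempty type equipped with a binary relation le, a binary operation max : M → M → M, unary operations s, f : M → M, and elements c_0, …, c_n ∈ M, satisfying (C1) le a a for all a, (C2) for all a, b, g, le (max a b) g implies le a g, (C3) for all a, b, g, le (max a b) g implies le b g, and, for a fixed i with 0 ≤ i ≤ n, (C4_i) for all α, β, it is not the case that f(β) = c_i, f(α) = c_i, and le (s β) α all hold. Then for every k ∈ ℕ, every sequence x : ℕ → M, and every t ∈ M, it is not the case that both f(x(k+1)) = c_i and f(m(k, x, max(s(x(k+1)), t))) = c_i. -/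
/-- The accumulator `t` lies below `m(k, x, t)`: each unfolding puts it in the right argument
of a further `max`, which (C3) strips off again. -/
theorem le_iterMax {M : Type*} (le : M → M → Prop) (mx : M → M → M) (s : M → M)
    (C1 : ∀ a : M, le a a) (C3 : ∀ a b g : M, le (mx a b) g → le b g)
    (k : ℕ) (x : ℕ → M) (t : M) : le t (iterMax mx s k x t) := by
  induction k generalizing t with
  | zero => exact C1 t
  | succ k ih => exact C3 _ _ _ (ih _)

theorem stmt5 (n : ℕ) (M : Type*) [Nonempty M] (le : M → M → Prop)
    (mx : M → M → M) (s f : M → M) (c : ℕ → M)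
    (C1 : ∀ a : M, le a a)
    (C2 : ∀ a b g : M, le (mx a b) g → le a g)
    (C3 : ∀ a b g : M, le (mx a b) g → le b g)
    (i : ℕ) (hi : i ≤ n)
    (C4 : ∀ α β : M, ¬ (f β = c i ∧ f α = c i ∧ le (s β) α)) :
    ∀ (k : ℕ) (x : ℕ → M) (t : M),
      ¬ (f (x (k + 1)) = c i ∧
          f (iterMax mx s k x (mx (s (x (k + 1))) t)) = c i) := by
  rintro k x t ⟨hx, hm⟩
  exact C4 _ _ ⟨hx, hm, C2 _ _ _ (le_iterMax le mx s C1 C3 k x _)⟩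
end

section
/- Let n ∈ ℕ, let b be a bijection (permutation) of {0, …, n}, and let k ∈ ℕ with k ≤ n. Let M be a nonempty type equipped with a binary relation le, a binary operation max : M → M → M, unary operations s, f : M → M, and elements c_0, …, c_n ∈ M, satisfying (C1) le a a for all a, (C2) for all a, b', g, le (max a b') g implies le a g, (C3) for all a, b', g, le (max a b') g implies le b' g, (C5) for every α ∈ M there exists i with 0 ≤ i ≤ n and f(α) = c_i, and (C4_{b(i)}) for every i with 0 ≤ i ≤ k: for all α, β, it is not the case that f(β) = c_{b(i)}, f(α) = c_{b(i)}, and le (s β) α all hold. Then for every sequence x : ℕ → M: if f(x(i+1)) = c_{b(i)} for all i with 0 ≤ i ≤ k, then there exists i with k < i ≤ n such that f(m(k, x, s(x(k+1)))) = c_{b(i)}. -/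
/-- Upper bounds of `m(k, x, t)` bound every component of the nested max. The relation `le` need not
be transitive, so the bound `g` is kept arbitrary in order for the induction to go through. -/
theorem iterMax_le {M : Type*} (le : M → M → Prop) (mx : M → M → M) (s : M → M)
    (C2 : ∀ a b' g : M, le (mx a b') g → le a g)
    (C3 : ∀ a b' g : M, le (mx a b') g → le b' g) (x : ℕ → M) (g : M) (k : ℕ) :
    ∀ t : M, le (iterMax mx s k x t) g →
      le t g ∧ ∀ j < k, le (s (x (j + 1))) g := by
  induction k with
  | zero => exact fun t h => ⟨h, fun j hj => absurd hj (Nat.not_lt_zero j)⟩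
  | succ k ih =>
    intro t h
    obtain ⟨h₁, h₂⟩ := ih _ h
    refine ⟨C3 _ _ _ h₁, fun j hj => ?_⟩
    rcases Nat.lt_succ_iff_lt_or_eq.mp hj with hj | rfl
    · exact h₂ j hj
    · exact C2 _ _ _ h₁

theorem stmt8 (n : ℕ) (b : Equiv.Perm (Fin (n + 1))) (k : ℕ) (hk : k ≤ n)
    (M : Type*) [Nonempty M] (le : M → M → Prop)
    (mx : M → M → M) (s f : M → M) (c : Fin (n + 1) → M)
    (C1 : ∀ a : M, le a a)
    (C2 : ∀ a b' g : M, le (mx a b') g → le a g)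
    (C3 : ∀ a b' g : M, le (mx a b') g → le b' g)
    (C5 : ∀ α : M, ∃ i : Fin (n + 1), f α = c i)
    (C4 : ∀ i : Fin (n + 1), (i : ℕ) ≤ k →
      ∀ α β : M, ¬ (f β = c (b i) ∧ f α = c (b i) ∧ le (s β) α)) :
    ∀ x : ℕ → M,
      (∀ i : Fin (n + 1), (i : ℕ) ≤ k → f (x ((i : ℕ) + 1)) = c (b i)) →
      ∃ i : Fin (n + 1), k < (i : ℕ) ∧
        f (iterMax mx s k x (s (x (k + 1)))) = c (b i) := by
  intro x hx
  obtain ⟨i₀, hi₀⟩ := C5 (iterMax mx s k x (s (x (k + 1))))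
  obtain ⟨i, rfl⟩ := b.surjective i₀
  refine ⟨i, ?_, hi₀⟩
  by_contra hki
  have hik : (i : ℕ) ≤ k := not_lt.mp hki
  obtain ⟨hlast, hrest⟩ := iterMax_le le mx s C2 C3 x _ k _ (C1 _)
  refine C4 i hik _ (x ((i : ℕ) + 1)) ⟨hx i hik, hi₀, ?_⟩
  rcases hik.lt_or_eq with h | h
  · exact hrest _ h
  · rw [h]
    exact hlast
end

section
/- For every n ∈ ℕ, the clause set C(n) is unsatisfiable. That is, there is no nonempty type M equipped with a binary relation le, a binary operation max : M → M → M, unary operations s, f : M → M, and elements c_0, …, c_n ∈ M satisfying all of: (C1) le a a for all a ∈ M; (C2) for all a, b, g ∈ M, le (max a b) g implies le a g; (C3) for all a, b, g ∈ M, le (max a b) g implies le b g; (C4_i) for each i with 0 ≤ i ≤ n and all α, β ∈ M, it is not the case that f(β) = c_i, f(α) = c_i, and le (s β) α all hold; and (C5) for every α ∈ M there exists i with 0 ≤ i ≤ n such that f(α) = c_i. -/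
/-!
Starting from any element, the sequence `x (k + 1) = max (s (x k)) (x k)` has the property that
`x k ≤ g` implies `s (x j) ≤ g` for every `j < k`, by unwinding the maxima with (C2) and (C3).
Taking `g = x k`, which (C1) permits, gives `s (x j) ≤ x k` for all `j < k`; no transitivity of
`≤` is needed. By (C5) and the pigeonhole principle two terms `x j`, `x k` with `j < k` have
the same `f`-value `c i`, which contradicts (C4).
-/

theorem stmt10 (n : ℕ) :
    ¬ ∃ (M : Type) (_ : Nonempty M) (le : M → M → Prop)
        (mx : M → M → M) (s f : M → M) (c : ℕ → M),
      (∀ a : M, le a a) ∧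
      (∀ a b g : M, le (mx a b) g → le a g) ∧
      (∀ a b g : M, le (mx a b) g → le b g) ∧
      (∀ i : ℕ, i ≤ n → ∀ α β : M, ¬ (f β = c i ∧ f α = c i ∧ le (s β) α)) ∧
      (∀ α : M, ∃ i : ℕ, i ≤ n ∧ f α = c i) := by
  rintro ⟨M, ⟨x₀⟩, le, mx, s, f, c, h1, h2, h3, h4, h5⟩
  let x : ℕ → M := fun k => Nat.rec x₀ (fun _ y => mx (s y) y) k
  have key : ∀ k g, le (x k) g → ∀ j, j < k → le (s (x j)) g := by
    intro k
    induction k with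
    | zero => intro g _ j hj; omega
    | succ k ih =>
      intro g hg j hj
      have hg' : le (mx (s (x k)) (x k)) g := hg
      rcases Nat.lt_succ_iff_lt_or_eq.mp hj with hlt | rfl
      · exact ih g (h3 _ _ _ hg') j hlt
      · exact h2 _ _ _ hg'
  choose i hi hf using h5
  obtain ⟨j, k, hne, heq⟩ := Finite.exists_ne_map_eq_of_infinite
    (fun k : ℕ => (⟨i (x k), Nat.lt_succ_of_le (hi _)⟩ : Fin (n + 1)))
  have heq' : i (x j) = i (x k) := congrArg Fin.val heq
  rcases Nat.lt_or_gt_of_ne hne with h | h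
  · exact h4 _ (hi (x k)) (x k) (x j) ⟨heq' ▸ hf (x j), hf _, key k _ (h1 _) j h⟩
  · exact h4 _ (hi (x j)) (x j) (x k) ⟨heq' ▸ hf (x k), hf _, key j _ (h1 _) k h⟩
end
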